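/- Let f_n : ℝ → ℝ be convex functions converging pointwise on ℝ to a function f : ℝ → ℝ. Let x₀ ∈ ℝ, suppose each f_n is differentiable at x₀ with derivative d_n, and suppose f is differentiable at x₀ with derivative d. Then d_n → d as n → ∞. -/

import Mathlib

/-- Convergence of derivatives of convex functions at a point of differentiability
of the pointwise limit (Rockafellar). -/
theorem tendsto_deriv_of_convex_pointwise (f : ℕ → ℝ → ℝ)
    (hconv : ∀ n, ConvexOn ℝ Set.univ (f n)) (g : ℝ → ℝ)
    (hpt : ∀ x : ℝ, Filter.Tendsto (fun n => f n x) Filter.atTop (nhds (g x)))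
    (x₀ : ℝ) (d : ℕ → ℝ) (hd : ∀ n, HasDerivAt (f n) (d n) x₀)
    (d₀ : ℝ) (hg : HasDerivAt g d₀ x₀) :
    Filter.Tendsto d Filter.atTop (nhds d₀) := by
  have hs := hasDerivAt_iff_tendsto_slope.1 hg
  have hR : Filter.Tendsto (slope g x₀) (nhdsWithin x₀ (Set.Ioi x₀)) (nhds d₀) :=
    hs.mono_left (nhdsWithin_mono _ fun y hy => ne_of_gt hy)
  have hL : Filter.Tendsto (slope g x₀) (nhdsWithin x₀ (Set.Iio x₀)) (nhds d₀) :=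
    hs.mono_left (nhdsWithin_mono _ fun y hy => ne_of_lt hy)
  have hsl : ∀ y, Filter.Tendsto (fun n => slope (f n) x₀ y) Filter.atTop
      (nhds (slope g x₀ y)) := by
    intro y
    simp only [slope_def_field]
    exact ((hpt y).sub (hpt x₀)).div_const _
  refine tendsto_order.2 ⟨fun a ha => ?_, fun a ha => ?_⟩
  · obtain ⟨y, hy, hlt⟩ := ((hL.eventually (lt_mem_nhds ha)).and self_mem_nhdsWithin).exists
    filter_upwards [(hsl y).eventually (lt_mem_nhds hy)] with n hn
    have := (hconv n).slope_le_of_hasDerivAt (Set.mem_univ y) (Set.mem_univ x₀) hlt (hd n)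
    rw [slope_comm] at this
    exact hn.trans_le this
  · obtain ⟨y, hy, hlt⟩ := ((hR.eventually (gt_mem_nhds ha)).and self_mem_nhdsWithin).exists
    filter_upwards [(hsl y).eventually (gt_mem_nhds hy)] with n hn
    exact ((hconv n).le_slope_of_hasDerivAt (Set.mem_univ x₀) (Set.mem_univ y) hlt
      (hd n)).trans_lt hn
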